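/- Let Ω be a finite set with |Ω| ≥ k ≥ 1, let f : 2^Ω → ℝ be a monotone submodular set function with f(∅) ≥ 0, and let ε ≥ 0. Consider the greedy procedure with an ε-accurate oracle: S^(0) = ∅, and for i = 1, …, k, S^(i) = S^(i−1) ∪ {a_i} where a_i maximizes over a ∈ Ω \ S^(i−1) some values x̄_i(a) satisfying |x̄_i(a) − f(S^(i−1) ∪ {a})| ≤ ε. Then f(S^(k)) ≥ (1 − 1/e)·max_{S ⊆ Ω, |S| ≤ k} f(S) − 2k·ε. In other words, the greedy algorithm is (1 − 1/e, 2k)-robust. -/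

import Mathlib

open Finset

/-!
Fix a competitor `T` with `#T ≤ m` and follow the gap `f T - f (S i)`. By submodularity the gap is
at most the sum of the marginal values of the elements of `T \ S i`, so an exact greedy step closes
at least a fraction `1 / m` of it. The oracle error enters twice in a step, once for the chosen
element and once for the best one, and loses at most `2ε`. Hence after `k` steps against `m = k`
the gap is at most `(1 - 1 / k) ^ k * f T + 2kε`.
-/

section Submodular

variable {Ω M : Type*} [DecidableEq Ω]

/-- Submodularity of a set function, encoded as diminishing marginal returns. -/
def IsSubmodular [Sub M] [LE M] (f : Finset Ω → M) : Prop :=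
  ∀ ⦃A B : Finset Ω⦄, A ⊆ B → ∀ ⦃x : Ω⦄, x ∉ B → f (insert x B) - f B ≤ f (insert x A) - f A

/-- A step of a greedy algorithm for `f` with additive error `δ`: `A` is enlarged to some `B` whose
value is within `δ` of that of every one-element extension of `A`. How `B` is found is left open,
and it may contain more than one new element. -/
structure IsApproxGreedyStep [Add M] [LE M] (f : Finset Ω → M) (δ : M) (A B : Finset Ω) :
    Prop where
  subset : A ⊆ B
  insert_le : ∀ b ∉ A, f (insert b A) ≤ f B + δ

theorem IsSubmodular.union_sub_le_sum [AddCommGroup M] [PartialOrder M] [IsOrderedAddMonoid M]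
    {f : Finset Ω → M} (hf : IsSubmodular f) (A T : Finset Ω) :
    f (A ∪ T) - f A ≤ ∑ x ∈ T \ A, (f (insert x A) - f A) := by
  induction T using Finset.induction_on with
  | empty => simp
  | insert x T hxT ih =>
    by_cases hxA : x ∈ A
    · rwa [union_insert, insert_eq_of_mem (mem_union_left T hxA), insert_sdiff_of_mem T hxA]
    · have hx : x ∉ A ∪ T := by simp [hxA, hxT]
      rw [union_insert, insert_sdiff_of_notMem T hxA, sum_insert (by simp [hxT]),
        ← sub_add_sub_cancel (f (insert x (A ∪ T))) (f (A ∪ T))]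
      exact add_le_add (hf subset_union_left hx) ih

theorem IsSubmodular.sub_le_nsmul_of_isApproxGreedyStep
    [AddCommGroup M] [PartialOrder M] [IsOrderedAddMonoid M]
    {f : Finset Ω → M} (hf : IsSubmodular f) (hmono : Monotone f) {δ : M} (hδ : 0 ≤ δ)
    {A B : Finset Ω} (h : IsApproxGreedyStep f δ A B) {T : Finset Ω} {m : ℕ} (hT : #T ≤ m) :
    f T - f A ≤ m • (f B - f A + δ) := by
  have gain_nonneg : 0 ≤ f B - f A + δ := add_nonneg (sub_nonneg.mpr (hmono h.subset)) hδ
  have marginal_le : ∀ x ∈ T \ A, f (insert x A) - f A ≤ f B - f A + δ := fun x hx ↦ by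
    rw [← add_sub_right_comm]
    exact sub_le_sub_right (h.insert_le x (mem_sdiff.mp hx).2) (f A)
  calc f T - f A ≤ f (A ∪ T) - f A := sub_le_sub_right (hmono subset_union_right) (f A)
    _ ≤ ∑ x ∈ T \ A, (f (insert x A) - f A) := hf.union_sub_le_sum A T
    _ ≤ #(T \ A) • (f B - f A + δ) := sum_le_card_nsmul _ _ _ marginal_le
    _ ≤ m • (f B - f A + δ) :=
        nsmul_le_nsmul_left gain_nonneg ((card_le_card sdiff_subset).trans hT)

theorem IsApproxGreedyStep.of_noisy_argmax
    [AddCommGroup M] [LinearOrder M] [IsOrderedAddMonoid M]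
    {f : Finset Ω → M} {ε : M} {A : Finset Ω} {v : Ω → M} {a : Ω}
    (hv : ∀ b ∉ A, |v b - f (insert b A)| ≤ ε) (ha : a ∉ A) (hmax : ∀ b ∉ A, v b ≤ v a) :
    IsApproxGreedyStep f (ε + ε) A (insert a A) where
  subset := subset_insert a A
  insert_le b hb :=
    calc f (insert b A) ≤ v b + ε := sub_le_iff_le_add'.mp (abs_sub_le_iff.mp (hv b hb)).2
      _ ≤ v a + ε := add_le_add_left (hmax b hb) ε
      _ ≤ f (insert a A) + ε + ε :=
          add_le_add_left (sub_le_iff_le_add'.mp (abs_sub_le_iff.mp (hv a ha)).1) ε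
      _ = f (insert a A) + (ε + ε) := add_assoc _ _ _

end Submodular

section Greedy

variable {Ω : Type*} [DecidableEq Ω]

theorem IsSubmodular.gap_le_mul_gap_add
    {K : Type*} [Field K] [LinearOrder K] [IsStrictOrderedRing K]
    {f : Finset Ω → K} (hf : IsSubmodular f) (hmono : Monotone f) {δ : K} (hδ : 0 ≤ δ)
    {A B : Finset Ω} (h : IsApproxGreedyStep f δ A B)
    {T : Finset Ω} {m : ℕ} (hm : 0 < m) (hT : #T ≤ m) :
    f T - f B ≤ (1 - 1 / m) * (f T - f A) + δ := by
  have fraction_le_gain : (f T - f A) / m ≤ f B - f A + δ :=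
    (div_le_iff₀' (Nat.cast_pos.mpr hm)).mpr <| by
      simpa only [nsmul_eq_mul] using hf.sub_le_nsmul_of_isApproxGreedyStep hmono hδ h hT
  calc f T - f B ≤ (f T - f A) - (f T - f A) / m + δ := by linarith
    _ = (1 - 1 / m) * (f T - f A) + δ := by ring

theorem IsSubmodular.gap_le_pow_mul_gap_add {f : Finset Ω → ℝ} (hf : IsSubmodular f)
    (hmono : Monotone f) {δ : ℝ} (hδ : 0 ≤ δ) {S : ℕ → Finset Ω} {n : ℕ}
    (hS : ∀ i < n, IsApproxGreedyStep f δ (S i) (S (i + 1)))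
    {T : Finset Ω} {m : ℕ} (hm : 0 < m) (hT : #T ≤ m) :
    f T - f (S n) ≤ (1 - 1 / m) ^ n * (f T - f (S 0)) + n * δ := by
  have ratio_nonneg : (0 : ℝ) ≤ 1 - 1 / m := Nat.one_sub_one_div_cast_nonneg m
  have ratio_le_one : (1 - 1 / m : ℝ) ≤ 1 := sub_le_self 1 (by positivity)
  -- Subtracting the accumulated error `i * δ` turns the recursion into a geometric one.
  have geometric : ∀ i < n, f T - f (S (i + 1)) - (i + 1 : ℕ) * δ ≤
      (1 - 1 / m) * (f T - f (S i) - i * δ) := fun i hi ↦ by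
    have contraction := hf.gap_le_mul_gap_add hmono hδ (hS i hi) hm hT
    have error_le : (1 - 1 / m) * (i * δ) ≤ i * δ :=
      mul_le_of_le_one_left (by positivity) ratio_le_one
    push_cast
    linarith
  simpa [sub_le_iff_le_add] using
    le_geom (u := fun i ↦ f T - f (S i) - i * δ) ratio_nonneg n geometric

theorem greedy_robust_general {f : Finset Ω → ℝ} (hf : IsSubmodular f) (hmono : Monotone f)
    (hf0 : 0 ≤ f ∅) {δ : ℝ} (hδ : 0 ≤ δ) {S : ℕ → Finset Ω} {k : ℕ} (hk : 0 < k)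
    (hS : ∀ i < k, IsApproxGreedyStep f δ (S i) (S (i + 1))) {T : Finset Ω} (hT : #T ≤ k) :
    (1 - 1 / Real.exp 1) * f T - k * δ ≤ f (S k) := by
  have f_nonneg (A : Finset Ω) : 0 ≤ f A := hf0.trans (hmono (empty_subset A))
  have pow_le : (1 - 1 / k : ℝ) ^ k ≤ 1 / Real.exp 1 := by
    simpa [Real.exp_neg] using Real.one_sub_div_pow_le_exp_neg (n := k) (Nat.one_le_cast.mpr hk)
  have gap_le : f T - f (S k) ≤ 1 / Real.exp 1 * f T + k * δ :=
    calc f T - f (S k) ≤ (1 - 1 / k) ^ k * (f T - f (S 0)) + k * δ :=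
          hf.gap_le_pow_mul_gap_add hmono hδ hS hk hT
      _ ≤ (1 - 1 / k) ^ k * f T + k * δ := by
          gcongr
          · exact pow_nonneg (Nat.one_sub_one_div_cast_nonneg k) k
          · exact sub_le_self _ (f_nonneg (S 0))
      _ ≤ 1 / Real.exp 1 * f T + k * δ := by
          gcongr
          exact f_nonneg T
  linarith

end Greedy

/-- The greedy procedure with an `ε`-accurate value oracle is `(1 − 1/e, 2k)`-robust:
if `S⁽⁰⁾ = ∅` and, for `i = 1, …, k`, `S⁽ⁱ⁾ = S⁽ⁱ⁻¹⁾ ∪ {aᵢ}` where `aᵢ` maximizes over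
`a ∈ Ω \ S⁽ⁱ⁻¹⁾` values `x̄ᵢ(a)` satisfying `|x̄ᵢ(a) − f(S⁽ⁱ⁻¹⁾ ∪ {a})| ≤ ε`, then
`f(S⁽ᵏ⁾) ≥ (1 − 1/e)·max_{|T| ≤ k} f(T) − 2kε`. -/
theorem greedy_robust {Ω : Type*} [Fintype Ω] [DecidableEq Ω]
    (k : ℕ) (hk : 1 ≤ k) (hcard : k ≤ Fintype.card Ω)
    (f : Finset Ω → ℝ)
    (hsub : ∀ A B : Finset Ω, A ⊆ B → ∀ x : Ω, x ∉ B →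
      f (insert x B) - f B ≤ f (insert x A) - f A)
    (hmono : ∀ C D : Finset Ω, C ⊆ D → f C ≤ f D)
    (hf0 : 0 ≤ f ∅)
    (ε : ℝ) (hε : 0 ≤ ε)
    (S : ℕ → Finset Ω) (xbar : ℕ → Ω → ℝ) (a : ℕ → Ω)
    (hS0 : S 0 = ∅)
    (hxbar : ∀ i : ℕ, 1 ≤ i → i ≤ k → ∀ b : Ω, b ∉ S (i - 1) →
      |xbar i b - f (insert b (S (i - 1)))| ≤ ε)
    (ha : ∀ i : ℕ, 1 ≤ i → i ≤ k → a i ∉ S (i - 1))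
    (hamax : ∀ i : ℕ, 1 ≤ i → i ≤ k → ∀ b : Ω, b ∉ S (i - 1) → xbar i b ≤ xbar i (a i))
    (hSi : ∀ i : ℕ, 1 ≤ i → i ≤ k → S i = insert (a i) (S (i - 1))) :
    ∀ T : Finset Ω, T.card ≤ k →
      f (S k) ≥ (1 - 1 / Real.exp 1) * f T - 2 * (k : ℝ) * ε := by
  intro T hT
  have greedy_step : ∀ i < k, IsApproxGreedyStep f (ε + ε) (S i) (S (i + 1)) := fun i hi ↦
    hSi (i + 1) (by lia) hi ▸ .of_noisy_argmax (hxbar (i + 1) (by lia) hi)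
      (ha (i + 1) (by lia) hi) (hamax (i + 1) (by lia) hi)
  linarith [greedy_robust_general hsub hmono hf0 (add_nonneg hε hε) hk greedy_step hT]
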